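/- Let Q, Q' ∈ ℝ^{k×N}, c ∈ ℝ^k with cᵢ > 0, n ∈ ℕ, and let x ∈ ℕ^N be a histogram with ‖x‖₁ = n. Let M(x) be the Laplace mechanism M_{Lap,c}(x, c⊙Q'). Then the expected ℓ₁ error satisfies ∫_{ℝ^k} ‖z − Qx‖₁ dM(x)(z) ≤ n ‖c⊙Q' − Q‖₁ + ‖c‖₁, where ‖A‖₁ = Σ_{i,l} |A_{i,l}| for a matrix A and ‖c‖₁ = Σᵢ cᵢ. (In particular, the expected ℓ₁ norm of a vector Y of independent Laplace coordinates with scales cᵢ equals ‖c‖₁.) -/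

import Mathlib

open MeasureTheory Finset

/-- Two histograms `x, x'` over a universe of size `N` are `(i,j)`-neighbors:
`‖x − x'‖₁ ≤ 2`, `xᵢ ≠ x'ᵢ` and `xⱼ ≠ x'ⱼ`. -/
def Neighbors {N : ℕ} (i j : Fin N) (x x' : Fin N → ℕ) : Prop :=
  (∑ l, |(x l : ℤ) - (x' l : ℤ)|) ≤ 2 ∧ x i ≠ x' i ∧ x j ≠ x' j

/-- `dX` is a privacy budget: nonnegative, symmetric, zero on the diagonal,
satisfying the triangle inequality. -/
def PrivacyBudget {N : ℕ} (dX : Fin N → Fin N → ℝ) : Prop :=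
  (∀ i j, 0 ≤ dX i j) ∧ (∀ i j, dX i j = dX j i) ∧ (∀ i, dX i i = 0) ∧
    (∀ i j k, dX i j ≤ dX i k + dX k j)

/-- A mechanism `M` (a map from histograms to probability measures on `Y`) is `dX`-private. -/
def DXPrivate {N : ℕ} {Y : Type*} [MeasurableSpace Y]
    (dX : Fin N → Fin N → ℝ) (M : (Fin N → ℕ) → Measure Y) : Prop :=
  ∀ i j : Fin N, i ≠ j → ∀ x x' : Fin N → ℕ, Neighbors i j x x' →
    ∀ S : Set Y, MeasurableSet S →
      M x S ≤ ENNReal.ofReal (Real.exp (dX i j)) * M x' S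

/-- The Laplace mechanism with scales `c`, centered at `a ∈ ℝ^k`. -/
noncomputable def lapMech {k : ℕ} (c a : Fin k → ℝ) : Measure (Fin k → ℝ) :=
  volume.withDensity fun z =>
    ENNReal.ofReal (∏ i, (1 / (2 * c i)) * Real.exp (-|z i - a i| / c i))

/-- The absolute central moments of the one-dimensional Laplace distribution. -/
theorem integral_laplace_abs_sub_pow {c : ℝ} (hc : 0 < c) (a : ℝ) (m : ℕ) :
    ∫ t : ℝ, 1 / (2 * c) * Real.exp (-|t - a| / c) * |t - a| ^ m = c ^ m * m.factorial := by
  rw [integral_sub_right_eq_self (fun t : ℝ => 1 / (2 * c) * Real.exp (-|t| / c) * |t| ^ m) a,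
    integral_comp_abs (f := fun t : ℝ => 1 / (2 * c) * Real.exp (-t / c) * t ^ m)]
  have h := Real.integral_rpow_mul_exp_neg_mul_Ioi (a := (m : ℝ) + 1) (r := 1 / c)
    (by positivity) (by positivity)
  have h_integrand : ∀ t : ℝ, 1 / (2 * c) * Real.exp (-t / c) * t ^ m =
      1 / (2 * c) * (t ^ ((m : ℝ) + 1 - 1) * Real.exp (-(1 / c * t))) := by
    intro t
    rw [add_sub_cancel_right, Real.rpow_natCast, show -(1 / c * t) = -t / c by ring]
    ring
  simp_rw [h_integrand]
  rw [integral_const_mul, h, Real.Gamma_nat_eq_factorial, one_div_one_div,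
    Real.rpow_add_one hc.ne', Real.rpow_natCast]
  field_simp

theorem integrable_laplace_abs_sub_pow {c : ℝ} (hc : 0 < c) (a : ℝ) (m : ℕ) :
    Integrable fun t : ℝ => 1 / (2 * c) * Real.exp (-|t - a| / c) * |t - a| ^ m := by
  refine Integrable.of_integral_ne_zero ?_
  rw [integral_laplace_abs_sub_pow hc]
  positivity

theorem lintegral_lapMech {k : ℕ} (c a : Fin k → ℝ) (f : (Fin k → ℝ) → ENNReal) :
    ∫⁻ z, f z ∂(lapMech c a) =
      ∫⁻ z, ENNReal.ofReal (∏ i, (1 / (2 * c i)) * Real.exp (-|z i - a i| / c i)) * f z := by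
  rw [lapMech, lintegral_withDensity_eq_lintegral_mul_non_measurable _ (by fun_prop)
    (Filter.Eventually.of_forall fun _ => ENNReal.ofReal_lt_top)]
  rfl

/-- The mixed absolute central moments of the Laplace mechanism. -/
theorem lintegral_lapMech_prod_abs_sub_pow {k : ℕ} {c : Fin k → ℝ} (hc : ∀ i, 0 < c i)
    (a : Fin k → ℝ) (m : Fin k → ℕ) :
    ∫⁻ z, ENNReal.ofReal (∏ i, |z i - a i| ^ m i) ∂(lapMech c a) =
      ENNReal.ofReal (∏ i, c i ^ m i * (m i).factorial) := by
  have h_nonneg : ∀ z : Fin k → ℝ,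
      0 ≤ ∏ i, (1 / (2 * c i)) * Real.exp (-|z i - a i| / c i) := fun z =>
    prod_nonneg fun i _ => by have := hc i; positivity
  rw [lintegral_lapMech]
  simp_rw [← ENNReal.ofReal_mul (h_nonneg _), ← prod_mul_distrib]
  rw [← ofReal_integral_eq_lintegral_ofReal]
  · rw [integral_fintype_prod_volume_eq_prod
      (f := fun i t => 1 / (2 * c i) * Real.exp (-|t - a i| / c i) * |t - a i| ^ m i)]
    simp_rw [integral_laplace_abs_sub_pow (hc _)]
  · exact Integrable.fintype_prod
      (f := fun i t => 1 / (2 * c i) * Real.exp (-|t - a i| / c i) * |t - a i| ^ m i)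
      fun i => integrable_laplace_abs_sub_pow (hc i) (a i) (m i)
  · exact Filter.Eventually.of_forall fun z =>
      prod_nonneg fun i _ => by have := hc i; positivity

theorem isProbabilityMeasure_lapMech {k : ℕ} {c : Fin k → ℝ} (hc : ∀ i, 0 < c i)
    (a : Fin k → ℝ) : IsProbabilityMeasure (lapMech c a) :=
  ⟨by simpa using lintegral_lapMech_prod_abs_sub_pow hc a 0⟩

theorem lintegral_lapMech_abs_sub {k : ℕ} {c : Fin k → ℝ} (hc : ∀ i, 0 < c i)
    (a : Fin k → ℝ) (j : Fin k) :
    ∫⁻ z, ENNReal.ofReal |z j - a j| ∂(lapMech c a) = ENNReal.ofReal (c j) := by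
  have h := lintegral_lapMech_prod_abs_sub_pow hc a (Pi.single j 1)
  have h_prod : ∀ g : Fin k → ℝ, ∏ i, g i ^ (Pi.single j 1 : Fin k → ℕ) i = g j := by
    intro g
    rw [prod_eq_single j (fun i _ hij => by simp [hij]) (by simp)]
    simp
  have h_fact : ∀ i, ((Pi.single j 1 : Fin k → ℕ) i).factorial = 1 := by
    intro i
    rcases eq_or_ne i j with rfl | hij <;> simp [*]
  simpa only [h_prod, h_fact, Nat.cast_one, mul_one] using h

/-- The expected `ℓ₁` norm of the noise of the Laplace mechanism. -/
theorem lintegral_lapMech_sum_abs_sub {k : ℕ} {c : Fin k → ℝ} (hc : ∀ i, 0 < c i)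
    (a : Fin k → ℝ) :
    ∫⁻ z, ENNReal.ofReal (∑ i, |z i - a i|) ∂(lapMech c a) = ENNReal.ofReal (∑ i, c i) := by
  simp_rw [ENNReal.ofReal_sum_of_nonneg fun i _ => abs_nonneg _]
  rw [lintegral_finsetSum _ fun i _ => by fun_prop,
    ENNReal.ofReal_sum_of_nonneg fun i _ => (hc i).le]
  simp_rw [lintegral_lapMech_abs_sub hc]

/-- The `ℓ₁` distance between the images of a nonnegative vector under two matrices. -/
theorem sum_abs_mulVec_sub_mulVec_le {k N : ℕ} (A B : Matrix (Fin k) (Fin N) ℝ)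
    {v : Fin N → ℝ} (hv : ∀ l, 0 ≤ v l) :
    ∑ i, |A.mulVec v i - B.mulVec v i| ≤ (∑ l, v l) * ∑ i, ∑ l, |A i l - B i l| := by
  rw [mul_sum]
  refine sum_le_sum fun i _ => ?_
  rw [← Pi.sub_apply, ← Matrix.sub_mulVec, mul_sum, Matrix.mulVec, dotProduct]
  refine (abs_sum_le_sum_abs _ _).trans (sum_le_sum fun l _ => ?_)
  rw [abs_mul, abs_of_nonneg (hv l), mul_comm, Matrix.sub_apply]
  refine mul_le_mul_of_nonneg_right ?_ (abs_nonneg _)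
  exact single_le_sum (f := v) (fun l _ => hv l) (mem_univ l)

/-- Expected ℓ₁ error of the dX-private Laplace mechanism:
`∫ ‖z − Qx‖₁ dM(x)(z) ≤ n ‖c⊙Q' − Q‖₁ + ‖c‖₁`. -/
theorem stmt_5 {k N : ℕ} (Q Q' : Matrix (Fin k) (Fin N) ℝ)
    (c : Fin k → ℝ) (hc : ∀ i, 0 < c i) (n : ℕ)
    (x : Fin N → ℕ) (hx : ∑ l, x l = n) :
    ∫⁻ z, ENNReal.ofReal (∑ i, |z i - Q.mulVec (fun l => (x l : ℝ)) i|)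
        ∂ (lapMech c (fun i => c i * Q'.mulVec (fun l => (x l : ℝ)) i))
      ≤ ENNReal.ofReal ((n : ℝ) * (∑ i, ∑ l, |c i * Q' i l - Q i l|) + ∑ i, c i) := by
  set v : Fin N → ℝ := fun l => (x l : ℝ)
  set a : Fin k → ℝ := fun i => c i * Q'.mulVec v i with ha
  have := isProbabilityMeasure_lapMech hc a
  have h_bias : ∑ i, |a i - Q.mulVec v i| ≤ n * ∑ i, ∑ l, |c i * Q' i l - Q i l| := by
    have h := sum_abs_mulVec_sub_mulVec_le (Matrix.of fun i l => c i * Q' i l) Q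
      (v := v) fun l => Nat.cast_nonneg _
    have h_scale : ∀ i, (Matrix.of fun i l => c i * Q' i l).mulVec v i = a i := by
      intro i
      simp [ha, Matrix.mulVec, dotProduct, mul_sum, mul_assoc]
    have h_size : ∑ l, v l = n := by
      rw [← hx, Nat.cast_sum]
    simpa only [h_scale, h_size, Matrix.of_apply] using h
  calc ∫⁻ z, ENNReal.ofReal (∑ i, |z i - Q.mulVec v i|) ∂(lapMech c a)
      ≤ ∫⁻ z, (ENNReal.ofReal (n * ∑ i, ∑ l, |c i * Q' i l - Q i l|) +
          ENNReal.ofReal (∑ i, |z i - a i|)) ∂(lapMech c a) := by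
        refine lintegral_mono fun z => ?_
        rw [← ENNReal.ofReal_add (by positivity) (by positivity)]
        refine ENNReal.ofReal_le_ofReal ?_
        have h : ∑ i, |z i - Q.mulVec v i| ≤ ∑ i, (|z i - a i| + |a i - Q.mulVec v i|) :=
          sum_le_sum fun i _ => abs_sub_le _ _ _
        rw [sum_add_distrib] at h
        linarith
    _ = ENNReal.ofReal (n * (∑ i, ∑ l, |c i * Q' i l - Q i l|) + ∑ i, c i) := by
        rw [lintegral_add_left measurable_const, lintegral_lapMech_sum_abs_sub hc,
          lintegral_const, measure_univ, mul_one,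
          ENNReal.ofReal_add (by positivity) (sum_nonneg fun i _ => (hc i).le)]
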